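/- arXiv:1709.02283 — 2 statements merged into one kernel-verified Lean document; each statement's English description precedes it below -/
import Mathlib

section
/- Let (a_n) and (b_n) be sequences of positive real numbers. The series ∑ a_n * b_n diverges if and only if for every sequence (q_n) of positive real numbers the following holds: for every positive integer N there exists n > N such that q_n * (a_n / a_{n+1}) - q_{n+1} < b_{n+1}. -/
/-!
Put `c n = q n * a n`. After multiplication by `a (n + 1)`, the reverse inequality
`b (n + 1) ≤ q n * (a n / a (n + 1)) - q (n + 1)` says that the term `a (n + 1) * b (n + 1)` is
at most the decrement `c n - c (n + 1)`, so it telescopes. Conversely, if `∑ a n * b n` converges,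
its partial sums lie strictly below some constant, and the gap between that constant and the
partial sums is a positive sequence whose decrements are exactly the terms of the series.
-/

open Filter Finset

theorem summable_of_eventually_le_sub_succ {f c : ℕ → ℝ} (hf : ∀ᶠ n in atTop, 0 ≤ f n)
    (hc : BddBelow (Set.range c)) (hfc : ∀ᶠ n in atTop, f n ≤ c n - c (n + 1)) :
    Summable f := by
  obtain ⟨m, hm⟩ := hc
  obtain ⟨N, hN⟩ := eventually_atTop.1 (hf.and hfc)
  rw [← summable_nat_add_iff N]
  refine summable_of_sum_range_le (c := c N - m) (fun n ↦ (hN _ (Nat.le_add_left N n)).1)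
    fun k ↦ ?_
  calc ∑ i ∈ range k, f (i + N)
      ≤ ∑ i ∈ range k, (c (N + i) - c (N + (i + 1))) := by
        gcongr with i
        rw [add_comm i N]
        exact (hN _ (Nat.le_add_right N i)).2
    _ = c N - c (N + k) := sum_range_sub' (fun i ↦ c (N + i)) k
    _ ≤ c N - m := sub_le_sub_left (hm (Set.mem_range_self _)) _

theorem exists_pos_sub_succ_eq_of_summable {f : ℕ → ℝ} (hf : Summable f) :
    ∃ c : ℕ → ℝ, (∀ n, 0 < c n) ∧ ∀ n, c n - c (n + 1) = f n := by
  obtain ⟨M, hM⟩ := hf.hasSum.tendsto_sum_nat.bddAbove_range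
  refine ⟨fun n ↦ M + 1 - ∑ i ∈ range n, f i, fun n ↦ ?_, fun n ↦ ?_⟩
  · exact sub_pos.2 ((hM (Set.mem_range_self n)).trans_lt (lt_add_one M))
  · simp only [sum_range_succ]
    ring

theorem summable_iff_exists_pos_le_sub_succ {f : ℕ → ℝ} (hf : ∀ᶠ n in atTop, 0 ≤ f n) :
    Summable f ↔
      ∃ c : ℕ → ℝ, (∀ n, 0 < c n) ∧ ∀ᶠ n in atTop, f n ≤ c n - c (n + 1) := by
  constructor
  · intro hsum
    obtain ⟨c, hc, hfc⟩ := exists_pos_sub_succ_eq_of_summable hsum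
    exact ⟨c, hc, .of_forall fun n ↦ (hfc n).ge⟩
  · rintro ⟨c, hc, hfc⟩
    exact summable_of_eventually_le_sub_succ hf ⟨0, Set.forall_mem_range.2 fun n ↦ (hc n).le⟩ hfc

theorem le_mul_div_sub_iff_mul_le {K : Type*} [Field K] [LinearOrder K] [IsStrictOrderedRing K]
    {x y : K} (hy : 0 < y) (p q b : K) :
    b ≤ p * (x / y) - q ↔ y * b ≤ p * x - q * y := by
  have hmul : y * (p * (x / y) - q) = p * x - q * y := by field_simp
  rw [← hmul, mul_le_mul_iff_right₀ hy]

theorem summable_mul_iff_exists_pos_le_mul_div_sub {a b : ℕ → ℝ} (ha : ∀ n, 0 < a n)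
    (hb : ∀ᶠ n in atTop, 0 ≤ b n) :
    Summable (fun n ↦ a n * b n) ↔
      ∃ q : ℕ → ℝ, (∀ n, 0 < q n) ∧
        ∀ᶠ n in atTop, b (n + 1) ≤ q n * (a n / a (n + 1)) - q (n + 1) := by
  have hab : ∀ᶠ n in atTop, 0 ≤ a (n + 1) * b (n + 1) :=
    ((tendsto_add_atTop_nat 1).eventually hb).mono fun n hn ↦ mul_nonneg (ha _).le hn
  simp only [le_mul_div_sub_iff_mul_le (ha _)]
  rw [← summable_nat_add_iff 1, summable_iff_exists_pos_le_sub_succ hab]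
  constructor
  · rintro ⟨c, hc, hle⟩
    refine ⟨fun n ↦ c n / a n, fun n ↦ div_pos (hc n) (ha n), ?_⟩
    simpa only [div_mul_cancel₀ _ (ha _).ne'] using hle
  · rintro ⟨q, hq, hle⟩
    exact ⟨fun n ↦ q n * a n, fun n ↦ mul_pos (hq n) (ha n), hle⟩

theorem kummer_extension_contrapositive_general {a b : ℕ → ℝ} (ha : ∀ n, 0 < a n)
    (hb : ∀ᶠ n in atTop, 0 ≤ b n) :
    ¬ Summable (fun n ↦ a n * b n) ↔
      ∀ q : ℕ → ℝ, (∀ n, 0 < q n) →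
        ∃ᶠ n in atTop, q n * (a n / a (n + 1)) - q (n + 1) < b (n + 1) := by
  rw [summable_mul_iff_exists_pos_le_mul_div_sub ha hb]
  simp only [not_exists, not_and, not_eventually, not_le]

/-- Contrapositive form of the extended Kummer's test: `∑ a n * b n` diverges iff for every
positive sequence `q` and every positive integer `N` there is some `n > N` with
`q n * (a n / a (n+1)) - q (n+1) < b (n+1)`. -/
theorem kummer_extension_contrapositive (a b : ℕ → ℝ)
    (ha : ∀ n, 0 < a n) (hb : ∀ n, 0 < b n) :
    ¬ Summable (fun n => a n * b n) ↔
      ∀ q : ℕ → ℝ, (∀ n, 0 < q n) →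
        ∀ N : ℕ, 0 < N → ∃ n, N < n ∧ q n * (a n / a (n + 1)) - q (n + 1) < b (n + 1) := by
  simpa only [(atTop_basis_Ioi' 0).frequently_iff, Set.mem_Ioi] using
    kummer_extension_contrapositive_general ha (.of_forall fun n ↦ (hb n).le)
end

section
/- Let (q_n) be any sequence of positive real numbers. Then the inequality p_{n+1} - p_n < p_n * (q_{n+1} - q_n + 1) / q_n holds for infinitely many values of n, where p_n denotes the n-th prime number. -/
/-- `nthPrime n` is the `n`-th prime number with 1-based indexing:
`nthPrime 1 = 2`, `nthPrime 2 = 3`, `nthPrime 3 = 5`, ... -/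
noncomputable def nthPrime (n : ℕ) : ℕ := Nat.nth Nat.Prime (n - 1)

/-!
If the inequality fails from some index on, then `q n * (p (n + 1) / p n) - q (n + 1) ≥ 1` from
there on. This is the hypothesis of Kummer's convergence test for `∑ 1 / p n` with weights `q`,
whereas that series diverges.
-/

open Filter

theorem summable_of_eventually_le_sub_succ_s6 {f g : ℕ → ℝ} (hf : ∀ᶠ n in atTop, 0 ≤ f n)
    (hg : ∀ᶠ n in atTop, 0 ≤ g n) (hfg : ∀ᶠ n in atTop, f n ≤ g n - g (n + 1)) :
    Summable f := by
  obtain ⟨N, hN⟩ := eventually_atTop.1 (hf.and (hg.and hfg))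
  rw [← summable_nat_add_iff N]
  refine summable_of_sum_range_le (c := g N) (fun n ↦ (hN (n + N) (by lia)).1) fun k ↦ ?_
  have g_nonneg : 0 ≤ g (k + N) := (hN (k + N) (by lia)).2.1
  calc ∑ i ∈ Finset.range k, f (i + N)
      ≤ ∑ i ∈ Finset.range k, (g (i + N) - g (i + 1 + N)) :=
        Finset.sum_le_sum fun i _ ↦ by
          simpa only [add_right_comm i 1 N] using (hN (i + N) (by lia)).2.2
    _ = g N - g (k + N) := by
        simpa only [zero_add] using Finset.sum_range_sub' (fun i ↦ g (i + N)) k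
    _ ≤ g N := sub_le_self _ g_nonneg

theorem summable_of_kummer_test {b q : ℕ → ℝ} {c : ℝ} (hc : 0 < c)
    (hb : ∀ᶠ n in atTop, 0 < b n) (hq : ∀ᶠ n in atTop, 0 ≤ q n)
    (h : ∀ᶠ n in atTop, c ≤ q n * (b n / b (n + 1)) - q (n + 1)) :
    Summable b := by
  have hb_succ : ∀ᶠ n in atTop, 0 < b (n + 1) := (tendsto_add_atTop_nat 1).eventually hb
  have hcb : Summable fun n ↦ c * b (n + 1) := by
    refine summable_of_eventually_le_sub_succ_s6 (g := fun n ↦ q n * b n) ?_ ?_ ?_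
    · filter_upwards [hb_succ] with n hbn using by positivity
    · filter_upwards [hb, hq] with n hbn hqn using by positivity
    · filter_upwards [hb_succ, h] with n hbn hn
      calc c * b (n + 1) ≤ (q n * (b n / b (n + 1)) - q (n + 1)) * b (n + 1) := by gcongr
        _ = q n * b n - q (n + 1) * b (n + 1) := by field_simp
  exact (summable_nat_add_iff 1).1 ((summable_mul_left_iff hc.ne').1 hcb)

theorem summable_comp_nth_iff {α : Type*} [AddCommMonoid α] [TopologicalSpace α] {p : ℕ → Prop}
    (hp : {n | p n}.Infinite) {f : ℕ → α} :
    Summable (fun n ↦ f (Nat.nth p n)) ↔ Summable ({n | p n}.indicator f) := by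
  rw [← Nat.range_nth_of_infinite hp, ← summable_subtype_iff_indicator]
  exact (Equiv.ofInjective _ (Nat.nth_injective hp)).summable_iff (f := f ∘ Subtype.val)

theorem nthPrime_pos (n : ℕ) : 0 < nthPrime n := (Nat.prime_nth_prime (n - 1)).pos

theorem not_summable_inv_nthPrime : ¬ Summable fun n ↦ (nthPrime n : ℝ)⁻¹ := by
  rw [← summable_nat_add_iff 1]
  change ¬ Summable fun n ↦ (Nat.nth Nat.Prime n : ℝ)⁻¹
  rw [summable_comp_nth_iff Nat.infinite_setOfPred_prime (f := fun n : ℕ ↦ (n : ℝ)⁻¹)]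
  simpa only [one_div] using not_summable_one_div_on_primes

theorem prime_gap_general_bound_general {a q : ℕ → ℝ} (ha : ∀ᶠ n in atTop, 0 < a n)
    (ha_sum : ¬ Summable fun n ↦ (a n)⁻¹) (hq : ∀ᶠ n in atTop, 0 < q n) :
    ∃ᶠ n in atTop, a (n + 1) - a n < a n * (q (n + 1) - q n + 1) / q n := by
  intro h_fails
  refine ha_sum (summable_of_kummer_test one_pos (ha.mono fun _ ↦ inv_pos.2)
    (hq.mono fun _ ↦ le_of_lt) ?_)
  filter_upwards [ha, hq, h_fails] with n han hqn hn
  have h_gap : a n * (q (n + 1) - q n + 1) ≤ (a (n + 1) - a n) * q n :=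
    (div_le_iff₀ hqn).1 (not_lt.1 hn)
  have h_ratio : q (n + 1) + 1 ≤ q n * a (n + 1) / a n := by
    rw [le_div_iff₀ han]
    linarith
  rw [inv_div_inv, ← mul_div_assoc]
  linarith

/-- For any positive sequence `q`, the inequality
`p (n+1) - p n < p n * (q (n+1) - q n + 1) / q n` holds for infinitely many positive
integers `n`. -/
theorem prime_gap_general_bound (q : ℕ → ℝ) (hq : ∀ n, 0 < q n) :
    ∃ᶠ n in Filter.atTop, 1 ≤ n ∧
      (nthPrime (n + 1) : ℝ) - (nthPrime n : ℝ)
        < (nthPrime n : ℝ) * (q (n + 1) - q n + 1) / q n :=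
  (eventually_ge_atTop 1).and_frequently <| prime_gap_general_bound_general
    (.of_forall fun n ↦ Nat.cast_pos.2 (nthPrime_pos n)) not_summable_inv_nthPrime (.of_forall hq)
end
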